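/- The co-volume function cov : ℝ⁶ → ℝ is C¹-smooth and convex on ℝ⁶, and its partial derivatives are ∂cov/∂l_ij(l) = α_ij(l) for all l ∈ ℝ⁶ and all pairs 1 ≤ i < j ≤ 4. -/

import Mathlib

noncomputable section

open Real Set Filter

/-- The generalized Euclidean triangle angle `aᵢ(x)` opposite the side of length `x i`,
for a generalized triangle with (positive) side lengths `x 0, x 1, x 2`:
it is `π` if `x i ≥ x j + x k`, `0` if some other side is at least the sum of the
remaining two, and otherwise the usual Euclidean angle `arccos((xⱼ²+x_k²−xᵢ²)/(2xⱼx_k))`. -/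
noncomputable def genAngle (x : Fin 3 → ℝ) (i : Fin 3) : ℝ :=
  if x (i + 1) + x (i + 2) ≤ x i then Real.pi
  else if x i + x (i + 2) ≤ x (i + 1) ∨ x i + x (i + 1) ≤ x (i + 2) then 0
  else Real.arccos
    ((x (i + 1) ^ 2 + x (i + 2) ^ 2 - x i ^ 2) / (2 * x (i + 1) * x (i + 2)))

/-- The three side lengths `e^{(l₁₂+l₃₄)/2}, e^{(l₁₃+l₂₄)/2}, e^{(l₁₄+l₂₃)/2}` of the
generalized Euclidean triangle associated to a length vector `l ∈ ℝ⁶`.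
Edge indices: `0 ↔ {1,2}, 1 ↔ {1,3}, 2 ↔ {1,4}, 3 ↔ {2,3}, 4 ↔ {2,4}, 5 ↔ {3,4}`,
so opposite pairs of edges are `(0,5), (1,4), (2,3)`. -/
noncomputable def triSides (l : Fin 6 → ℝ) (k : Fin 3) : ℝ :=
  if k.val = 0 then Real.exp ((l 0 + l 5) / 2)
  else if k.val = 1 then Real.exp ((l 1 + l 4) / 2)
  else Real.exp ((l 2 + l 3) / 2)

/-- The quad (pair of opposite edges) containing the edge `p`. -/
def quadIndex (p : Fin 6) : Fin 3 :=
  if p.val = 0 ∨ p.val = 5 then 0 else if p.val = 1 ∨ p.val = 4 then 1 else 2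

/-- The extended dihedral angle `α_p(l)` of the generalized decorated tetrahedron with
length vector `l ∈ ℝ⁶` at the edge `p`. -/
noncomputable def dihedral (l : Fin 6 → ℝ) (p : Fin 6) : ℝ :=
  genAngle (triSides l) (quadIndex p)

/-- The edge index in `Fin 6` of the edge `{i,j}` of the tetrahedron on vertices `Fin 4`
(junk value for `i = j`). -/
def edgeOf (i j : Fin 4) : Fin 6 :=
  if (i.val = 0 ∧ j.val = 1) ∨ (i.val = 1 ∧ j.val = 0) then 0
  else if (i.val = 0 ∧ j.val = 2) ∨ (i.val = 2 ∧ j.val = 0) then 1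
  else if (i.val = 0 ∧ j.val = 3) ∨ (i.val = 3 ∧ j.val = 0) then 2
  else if (i.val = 1 ∧ j.val = 2) ∨ (i.val = 2 ∧ j.val = 1) then 3
  else if (i.val = 1 ∧ j.val = 3) ∨ (i.val = 3 ∧ j.val = 1) then 4
  else 5

/-- The two endpoints of the edge `p` of the tetrahedron. -/
def endPts (p : Fin 6) : Fin 4 × Fin 4 :=
  if p.val = 0 then (0, 1) else if p.val = 1 then (0, 2) else if p.val = 2 then (0, 3)
  else if p.val = 3 then (1, 2) else if p.val = 4 then (1, 3) else (2, 3)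

/-- The Lobachevsky function `Λ(x) = −∫₀ˣ ln|2 sin t| dt`. -/
noncomputable def lob (x : ℝ) : ℝ := -∫ t in (0:ℝ)..x, Real.log |2 * Real.sin t|

/-- The volume of the generalized decorated tetrahedron with length vector `l`. -/
noncomputable def vol6 (l : Fin 6 → ℝ) : ℝ := (1 / 2 : ℝ) * ∑ p : Fin 6, lob (dihedral l p)

/-- The co-volume function `cov(l) = 2 vol(l) + Σ α_p(l) l_p` on `ℝ⁶`. -/
noncomputable def cov6 (l : Fin 6 → ℝ) : ℝ := 2 * vol6 l + ∑ p : Fin 6, dihedral l p * l p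

/-- `𝓛 ⊂ ℝ⁶`: length vectors of genuine decorated ideal hyperbolic tetrahedra, i.e. those
whose associated generalized Euclidean triangle satisfies the strict triangle inequalities. -/
def Ldom : Set (Fin 6 → ℝ) :=
  {l | ∀ i : Fin 3, triSides l i < triSides l (i + 1) + triSides l (i + 2)}

/-- The action of `w ∈ ℝ⁴` on `l ∈ ℝ⁶`: `(w + l)_{ij} = l_{ij} + wᵢ + wⱼ`. -/
def act (w : Fin 4 → ℝ) (l : Fin 6 → ℝ) : Fin 6 → ℝ :=
  fun p => l p + w (endPts p).1 + w (endPts p).2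

/-- `ℝ̂⁴ = {w + 0 : w ∈ ℝ⁴} ⊂ ℝ⁶`. -/
def hatR4 : Set (Fin 6 → ℝ) := {x | ∃ w : Fin 4 → ℝ, x = act w 0}

/-- `i, j, k, h` are pairwise distinct, i.e. `{i,j,k,h} = {1,2,3,4}`. -/
def Distinct4 (i j k h : Fin 4) : Prop :=
  i ≠ j ∧ i ≠ k ∧ i ≠ h ∧ j ≠ k ∧ j ≠ h ∧ k ≠ h

/-!
On the simplex of angle triples with sum `π`, the functional
`a ↦ ∑ Λ(aᵢ) + ∑ aᵢ log xᵢ` is concave, and its maximum is attained at the generalized angles of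
the triangle with sides `x`: for a genuine triangle the law of sines `xᵢ = 2R sin aᵢ` says that
these angles form a critical point, and degenerate triangles follow by continuity and monotonicity
in the longest side. Hence `cov` is, up to the factor `2`, a supremum of functions affine in `l`,
and the dihedral angles are a subgradient of it. A function with a continuous choice of subgradient
is convex and `C¹`, with that subgradient as its gradient.
-/

open scoped Topology

section Subgradient

theorem convexOn_of_subgradient {𝕜 E : Type*} [CommRing 𝕜] [LinearOrder 𝕜] [IsStrictOrderedRing 𝕜]
    [AddCommGroup E] [Module 𝕜 E] {s : Set E} {f : E → 𝕜} {g : E → E →ₗ[𝕜] 𝕜} (hs : Convex 𝕜 s)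
    (hfg : ∀ x ∈ s, ∀ y ∈ s, f x + g x (y - x) ≤ f y) : ConvexOn 𝕜 s f := by
  refine ⟨hs, fun x hx y hy a b ha hb hab ↦ ?_⟩
  have hz := hs hx hy ha hb hab
  set z := a • x + b • y with hz_def
  have hbalance : a * g z (x - z) + b * g z (y - z) = 0 := by
    simp only [← smul_eq_mul, ← map_smul, ← map_add]
    rw [show a • (x - z) + b • (y - z) = z - (a + b) • z by rw [hz_def]; module, hab, one_smul,
      sub_self, map_zero]
  calc f z = a * (f z + g z (x - z)) + b * (f z + g z (y - z)) := by
        linear_combination -(hab * f z) - hbalance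
    _ ≤ a * f x + b * f y := by gcongr <;> exact hfg z hz _ ‹_›

theorem hasFDerivAt_of_subgradient {E : Type*} [NormedAddCommGroup E] [NormedSpace ℝ E]
    {f : E → ℝ} {g : E → E →L[ℝ] ℝ} {x : E} (hg : ContinuousAt g x)
    (hfg : ∀ᶠ y in 𝓝 x, f x + g x (y - x) ≤ f y ∧ f y + g y (x - y) ≤ f x) :
    HasFDerivAt f (g x) x := by
  rw [hasFDerivAt_iff_isLittleO, Asymptotics.isLittleO_iff]
  intro ε hε
  filter_upwards [hfg, Metric.continuousAt_iff'.1 hg ε hε] with y ⟨hxy, hyx⟩ hdist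
  have hneg : g y (x - y) = -g y (y - x) := by rw [← map_neg, neg_sub]
  have hclose : g y (y - x) - g x (y - x) ≤ ε * ‖y - x‖ :=
    calc g y (y - x) - g x (y - x) ≤ ‖(g y - g x) (y - x)‖ := le_abs_self _
      _ ≤ ‖g y - g x‖ * ‖y - x‖ := (g y - g x).le_opNorm _
      _ ≤ ε * ‖y - x‖ := by rw [← dist_eq_norm]; gcongr
  rw [Real.norm_eq_abs, abs_of_nonneg (by linarith)]
  linarith

end Subgradient

section Lobachevsky

theorem intervalIntegrable_log_abs_two_mul_sin (a b : ℝ) :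
    IntervalIntegrable (fun t ↦ log |2 * sin t|) MeasureTheory.volume a b := by
  simp only [log_abs]
  exact MeromorphicOn.intervalIntegrable_log fun x _ ↦ AnalyticAt.meromorphicAt (by fun_prop)

theorem continuous_lob : Continuous lob :=
  (intervalIntegral.continuous_primitive intervalIntegrable_log_abs_two_mul_sin 0).neg

theorem hasDerivAt_lob {x : ℝ} (hx : sin x ≠ 0) : HasDerivAt lob (-log (2 * sin x)) x := by
  have hcont : ∀ y ∈ {y | sin y ≠ 0}, ContinuousAt (fun t ↦ log |2 * sin t|) y := fun y hy ↦
    ContinuousAt.log (by fun_prop) (abs_ne_zero.2 (mul_ne_zero two_ne_zero hy))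
  have hmeas := ContinuousOn.stronglyMeasurableAtFilter (μ := MeasureTheory.volume)
    (isOpen_ne_fun continuous_sin continuous_const) (fun y hy ↦ (hcont y hy).continuousWithinAt)
    x hx
  rw [← log_abs]
  exact (intervalIntegral.integral_hasDerivAt_right
    (intervalIntegrable_log_abs_two_mul_sin 0 x) hmeas (hcont x hx)).neg

theorem hasDerivAt_log_two_mul_sin {x : ℝ} (hx : sin x ≠ 0) :
    HasDerivAt (fun t ↦ log (2 * sin t)) (cot x) x := by
  convert! ((hasDerivAt_sin x).const_mul 2).log (mul_ne_zero two_ne_zero hx) using 1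
  rw [cot_eq_cos_div_sin, mul_div_mul_left _ _ two_ne_zero]

end Lobachevsky

theorem fin_three_eq_or_eq_add_one_or_eq_add_two (i j : Fin 3) :
    j = i ∨ j = i + 1 ∨ j = i + 2 := by
  decide +revert

theorem sum_fin_three_eq_add_add {M : Type*} [AddCommMonoid M] (f : Fin 3 → M) (i : Fin 3) :
    ∑ j, f j = f i + f (i + 1) + f (i + 2) := by
  rw [← Equiv.sum_comp (Equiv.addLeft i), Fin.sum_univ_three]
  simp

section Cotangent

/-- The numerator is `|p sin b + q e^{ic} sin a|²`. -/
theorem sq_mul_cot_add_eq_div {a b c p q r : ℝ} (ha : sin a ≠ 0) (hb : sin b ≠ 0) (hc : sin c ≠ 0)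
    (hsum : a + b + c = π) (hpqr : p + q + r = 0) :
    p ^ 2 * cot a + q ^ 2 * cot b + r ^ 2 * cot c =
      ((p * sin b + q * sin a * cos c) ^ 2 + (q * sin a * sin c) ^ 2) /
        (sin a * sin b * sin c) := by
  have hsin_a : sin a = sin b * cos c + cos b * sin c := by
    rw [← sin_add, ← sin_pi_sub]; congr 1; linarith
  have hsin_b : sin b = sin a * cos c + cos a * sin c := by
    rw [← sin_add, ← sin_pi_sub]; congr 1; linarith
  obtain rfl : r = -(p + q) := by linarith
  simp only [cot_eq_cos_div_sin]
  field_simp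
  linear_combination -(p ^ 2 * sin b) * hsin_b - q ^ 2 * sin a * hsin_a
    - q ^ 2 * sin a ^ 2 * sin_sq_add_cos_sq c

theorem sq_mul_cot_add_nonneg {a b c p q r : ℝ} (ha : 0 < sin a) (hb : 0 < sin b) (hc : 0 < sin c)
    (hsum : a + b + c = π) (hpqr : p + q + r = 0) :
    0 ≤ p ^ 2 * cot a + q ^ 2 * cot b + r ^ 2 * cot c := by
  rw [sq_mul_cot_add_eq_div ha.ne' hb.ne' hc.ne' hsum hpqr]
  positivity

end Cotangent

section AngleSimplex

/-- The triples of angles of possibly degenerate Euclidean triangles. -/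
def angleSimplex : Set (Fin 3 → ℝ) := {a | (∀ i, 0 ≤ a i) ∧ ∑ i, a i = π}

/-- The triples of angles of nondegenerate Euclidean triangles. -/
def openAngleSimplex : Set (Fin 3 → ℝ) := {a | (∀ i, 0 < a i) ∧ ∑ i, a i = π}

variable {a b : Fin 3 → ℝ}

theorem le_pi_of_mem_angleSimplex (ha : a ∈ angleSimplex) (i : Fin 3) : a i ≤ π :=
  ha.2 ▸ Finset.single_le_sum (fun j _ ↦ ha.1 j) (Finset.mem_univ i)

theorem sin_pos_of_mem_openAngleSimplex (ha : a ∈ openAngleSimplex) (i : Fin 3) :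
    0 < sin (a i) := by
  obtain ⟨j, hij⟩ := exists_ne i
  refine sin_pos_of_pos_of_lt_pi (ha.1 i) (ha.2 ▸ ?_)
  exact Finset.single_lt_sum hij (Finset.mem_univ i) (Finset.mem_univ j) (ha.1 j)
    fun k _ _ ↦ (ha.1 k).le

theorem segment_mem_openAngleSimplex (ha : a ∈ openAngleSimplex) (hb : b ∈ angleSimplex) {t : ℝ}
    (ht : t ∈ Ico 0 1) : (fun i ↦ a i + t * (b i - a i)) ∈ openAngleSimplex := by
  refine ⟨fun i ↦ ?_, ?_⟩
  · have := mul_pos (sub_pos.2 ht.2) (ha.1 i)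
    have := mul_nonneg ht.1 (hb.1 i)
    linarith
  · rw [Finset.sum_add_distrib, ← Finset.mul_sum, Finset.sum_sub_distrib, hb.2, ha.2, sub_self,
      mul_zero, add_zero]

theorem hasDerivAt_add_mul_sub {𝕜 : Type*} [NontriviallyNormedField 𝕜] (x y t : 𝕜) :
    HasDerivAt (fun t ↦ x + t * (y - x)) (y - x) t :=
  (hasDerivAt_mul_const (y - x)).const_add x

theorem hasDerivAt_sum_lob_segment (ha : a ∈ openAngleSimplex) (hb : b ∈ angleSimplex) {t : ℝ}
    (ht : t ∈ Ico 0 1) :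
    HasDerivAt (fun t ↦ ∑ i, lob (a i + t * (b i - a i)))
      (∑ i, -log (2 * sin (a i + t * (b i - a i))) * (b i - a i)) t := by
  have hsin := sin_pos_of_mem_openAngleSimplex (segment_mem_openAngleSimplex ha hb ht)
  exact HasDerivAt.fun_sum fun i _ ↦
    (hasDerivAt_lob (hsin i).ne').comp (h₂ := lob) t (hasDerivAt_add_mul_sub (a i) (b i) t)

theorem hasDerivAt_deriv_sum_lob_segment (ha : a ∈ openAngleSimplex) (hb : b ∈ angleSimplex) {t : ℝ}
    (ht : t ∈ Ico 0 1) :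
    HasDerivAt (fun t ↦ ∑ i, -log (2 * sin (a i + t * (b i - a i))) * (b i - a i))
      (-∑ i, (b i - a i) ^ 2 * cot (a i + t * (b i - a i))) t := by
  have hsin := sin_pos_of_mem_openAngleSimplex (segment_mem_openAngleSimplex ha hb ht)
  convert! HasDerivAt.fun_sum fun i (_ : i ∈ Finset.univ) ↦
    (((hasDerivAt_log_two_mul_sin (hsin i).ne').comp t
      (hasDerivAt_add_mul_sub (a i) (b i) t)).neg.mul_const (b i - a i)) using 1
  rw [← Finset.sum_neg_distrib]
  exact Finset.sum_congr rfl fun i _ ↦ by ring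

theorem concaveOn_sum_lob_segment (ha : a ∈ openAngleSimplex) (hb : b ∈ angleSimplex) :
    ConcaveOn ℝ (Icc 0 1) fun t ↦ ∑ i, lob (a i + t * (b i - a i)) := by
  have hIco : ∀ t ∈ interior (Icc (0 : ℝ) 1), t ∈ Ico (0 : ℝ) 1 := fun t ht ↦
    Ioo_subset_Ico_self (interior_Icc (a := (0 : ℝ)) ▸ ht)
  refine concaveOn_of_hasDerivWithinAt2_nonpos (convex_Icc 0 1)
    (by have := continuous_lob; fun_prop)
    (fun t ht ↦ (hasDerivAt_sum_lob_segment ha hb (hIco t ht)).hasDerivWithinAt)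
    (fun t ht ↦ (hasDerivAt_deriv_sum_lob_segment ha hb (hIco t ht)).hasDerivWithinAt)
    (fun t ht ↦ neg_nonpos.2 ?_)
  have hmem := segment_mem_openAngleSimplex ha hb (hIco t ht)
  have hsin := sin_pos_of_mem_openAngleSimplex hmem
  have hd : ∑ i, (b i - a i) = 0 := by rw [Finset.sum_sub_distrib, hb.2, ha.2, sub_self]
  have hsum := hmem.2
  rw [Fin.sum_univ_three] at hsum hd ⊢
  exact sq_mul_cot_add_nonneg (hsin 0) (hsin 1) (hsin 2) hsum hd

theorem sum_lob_le_tangent (ha : a ∈ openAngleSimplex) (hb : b ∈ angleSimplex) :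
    ∑ i, lob (b i) ≤ ∑ i, lob (a i) + ∑ i, -log (2 * sin (a i)) * (b i - a i) := by
  have hslope := (concaveOn_sum_lob_segment ha hb).slope_le_of_hasDerivAt
    (left_mem_Icc.2 zero_le_one) (right_mem_Icc.2 zero_le_one) one_pos
    (hasDerivAt_sum_lob_segment ha hb ⟨le_rfl, one_pos⟩)
  simp only [slope_def_field, one_mul, zero_mul, add_zero, add_sub_cancel, sub_zero, div_one]
    at hslope
  linarith

end AngleSimplex

section TriangleCovolume

/-- Half the co-volume of a tetrahedron with quad side lengths `x`, as a functional of arbitrary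
(not necessarily geometric) dihedral angles `a`. -/
def triangleCovolume (x a : Fin 3 → ℝ) : ℝ := ∑ i, (lob (a i) + a i * log (x i))

variable {x a b : Fin 3 → ℝ}

theorem triangleCovolume_update (x a : Fin 3 → ℝ) (i : Fin 3) (t : ℝ) :
    triangleCovolume (Function.update x i t) a =
      triangleCovolume x a + a i * (log t - log (x i)) := by
  simp only [triangleCovolume, sum_fin_three_eq_add_add _ i, Function.update_self, ne_eq,
    add_eq_left, one_ne_zero, not_false_eq_true, Function.update_of_ne, Fin.isValue, Fin.reduceEq]
  ring

theorem triangleCovolume_le_of_law_sin {R : ℝ} (hR : R ≠ 0) (ha : a ∈ openAngleSimplex)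
    (hx : ∀ i, x i = R * (2 * sin (a i))) (hb : b ∈ angleSimplex) :
    triangleCovolume x b ≤ triangleCovolume x a := by
  have hlog : ∀ i, log (x i) = log R + log (2 * sin (a i)) := fun i ↦ by
    rw [hx, log_mul hR (mul_pos two_pos (sin_pos_of_mem_openAngleSimplex ha i)).ne']
  have htangent := sum_lob_le_tangent ha hb
  have ha_sum := ha.2
  have hb_sum := hb.2
  simp only [triangleCovolume, hlog, Fin.sum_univ_three] at *
  linear_combination htangent + log R * hb_sum - log R * ha_sum

end TriangleCovolume

section EuclideanTriangle

open scoped EuclideanGeometry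

variable {V P : Type*} [NormedAddCommGroup V] [InnerProductSpace ℝ V] [MetricSpace P]
  [NormedAddTorsor V P]

theorem angle_eq_arccos_dist (A B C : P) :
    ∠ A B C = arccos ((dist A B ^ 2 + dist B C ^ 2 - dist C A ^ 2) /
      (2 * dist A B * dist B C)) := by
  rw [EuclideanGeometry.angle, InnerProductGeometry.angle,
    real_inner_eq_norm_mul_self_add_norm_mul_self_sub_norm_sub_mul_self_div_two,
    vsub_sub_vsub_cancel_right, dist_eq_norm_vsub V A B, dist_comm B C, dist_eq_norm_vsub V C B,
    dist_comm C A, dist_eq_norm_vsub V A C, div_div]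
  congr 1
  ring

variable {x : Fin 3 → ℝ}

theorem pos_of_triangle_inequalities (h : ∀ i, x i < x (i + 1) + x (i + 2)) (i : Fin 3) :
    0 < x i := by
  have h₁ := h (i + 1)
  have h₂ := h (i + 2)
  simp only [add_assoc, Fin.reduceAdd, add_zero] at h₁ h₂
  linarith

theorem exists_dist_eq_of_triangle_inequalities (h : ∀ i, x i < x (i + 1) + x (i + 2)) :
    ∃ p : Fin 3 → ℂ, ∀ i, dist (p (i + 1)) (p (i + 2)) = x i := by
  have hpos := pos_of_triangle_inequalities h
  have h₀ : x 0 < x 1 + x 2 := h 0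
  have h₁ : x 1 < x 2 + x 0 := h 1
  have h₂ : x 2 < x 0 + x 1 := h 2
  have := hpos 0
  have := hpos 1
  have := hpos 2
  -- Put one side on the real axis; `u` is then the real part of the opposite vertex.
  set u := (x 1 ^ 2 + x 2 ^ 2 - x 0 ^ 2) / (2 * x 2) with hu
  have hu_mul : 2 * x 2 * u = x 1 ^ 2 + x 2 ^ 2 - x 0 ^ 2 := by rw [hu]; field_simp
  have hu_sq : u ^ 2 ≤ x 1 ^ 2 := by
    refine sq_le_sq' ?_ ?_
    · rw [hu, le_div_iff₀ (by positivity)]; nlinarith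
    · rw [hu, div_le_iff₀ (by positivity)]; nlinarith
  refine ⟨![0, x 2, ⟨u, √(x 1 ^ 2 - u ^ 2)⟩], fun i ↦ ?_⟩
  have hsqrt := sq_sqrt (sub_nonneg.2 hu_sq)
  rw [Complex.dist_eq_re_im, sqrt_eq_iff_mul_self_eq_of_pos (hpos i)]
  fin_cases i <;>
    simp only [Fin.zero_eta, Fin.mk_one, Fin.reduceFinMk, Fin.isValue, zero_add, Fin.reduceAdd,
      Matrix.cons_val_zero, Matrix.cons_val_one, Matrix.cons_val, Complex.ofReal_re,
      Complex.ofReal_im, Complex.zero_re, Complex.zero_im, zero_sub, sub_zero, sub_self, even_two,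
      Even.neg_pow, hsqrt] <;>
    linarith

theorem genAngle_eq_arccos (hx : ∀ i, 0 < x i) (i : Fin 3) :
    genAngle x i = arccos ((x (i + 1) ^ 2 + x (i + 2) ^ 2 - x i ^ 2) /
      (2 * x (i + 1) * x (i + 2))) := by
  have := hx i
  have := hx (i + 1)
  have := hx (i + 2)
  unfold genAngle
  split_ifs with hpi hzero
  · rw [eq_comm, arccos_eq_pi, div_le_iff₀ (by positivity)]
    nlinarith
  · rw [eq_comm, arccos_eq_zero, le_div_iff₀ (by positivity)]
    rcases hzero with h | h <;> nlinarith
  · rfl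

theorem genAngle_nonneg (x : Fin 3 → ℝ) (i : Fin 3) : 0 ≤ genAngle x i := by
  unfold genAngle
  split_ifs
  exacts [pi_nonneg, le_rfl, arccos_nonneg _]

theorem continuousOn_genAngle (i : Fin 3) :
    ContinuousOn (fun x ↦ genAngle x i) {x | ∀ i, 0 < x i} := by
  refine ContinuousOn.congr (continuous_arccos.comp_continuousOn ?_)
    fun x hx ↦ genAngle_eq_arccos hx i
  refine ContinuousOn.div (by fun_prop) (by fun_prop) fun x hx ↦ ?_
  have := hx (i + 1)
  have := hx (i + 2)
  positivity

theorem genAngle_eq_single {i : Fin 3} (hx : ∀ i, 0 < x i) (h : x (i + 1) + x (i + 2) ≤ x i) :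
    genAngle x = Pi.single i π := by
  have := hx (i + 1)
  have := hx (i + 2)
  funext j
  obtain rfl | rfl | rfl := fin_three_eq_or_eq_add_one_or_eq_add_two i j
  · rw [genAngle, if_pos h, Pi.single_eq_same]
  · rw [Pi.single_eq_of_ne (by simp), genAngle]
    simp only [add_assoc, Fin.reduceAdd, add_zero]
    rw [if_neg (by linarith), if_pos (.inr (by linarith))]
  · rw [Pi.single_eq_of_ne (by simp), genAngle]
    simp only [add_assoc, Fin.reduceAdd, add_zero]
    rw [if_neg (by linarith), if_pos (.inl (by linarith))]

theorem genAngle_pos (h : ∀ i, x i < x (i + 1) + x (i + 2)) (i : Fin 3) : 0 < genAngle x i := by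
  have hpos := pos_of_triangle_inequalities h
  have := hpos (i + 1)
  have := hpos (i + 2)
  have h₁ := h (i + 1)
  have h₂ := h (i + 2)
  simp only [add_assoc, Fin.reduceAdd, add_zero] at h₁ h₂
  rw [genAngle_eq_arccos hpos, arccos_pos, div_lt_one (by positivity)]
  nlinarith

theorem angle_eq_genAngle (hx : ∀ i, 0 < x i) {p : Fin 3 → P}
    (hp : ∀ i, dist (p (i + 1)) (p (i + 2)) = x i) (i : Fin 3) :
    ∠ (p (i + 2)) (p i) (p (i + 1)) = genAngle x i := by
  have h₁ := hp (i + 1)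
  have h₂ := hp (i + 2)
  simp only [add_assoc, Fin.reduceAdd, add_zero] at h₁ h₂
  rw [angle_eq_arccos_dist, hp, h₁, h₂, genAngle_eq_arccos hx]

theorem genAngle_mem_openAngleSimplex (h : ∀ i, x i < x (i + 1) + x (i + 2)) :
    genAngle x ∈ openAngleSimplex := by
  refine ⟨genAngle_pos h, ?_⟩
  have hpos := pos_of_triangle_inequalities h
  obtain ⟨p, hp⟩ := exists_dist_eq_of_triangle_inequalities h
  have hne : p 0 ≠ p 2 := (dist_pos.1 (hp 1 ▸ hpos 1)).symm
  simp only [Fin.sum_univ_three, ← angle_eq_genAngle hpos hp, Fin.reduceAdd]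
  exact EuclideanGeometry.angle_add_angle_add_angle_eq_pi (p 1) hne

theorem genAngle_mem_angleSimplex (hx : ∀ i, 0 < x i) : genAngle x ∈ angleSimplex := by
  refine ⟨genAngle_nonneg x, ?_⟩
  by_cases h : ∀ i, x i < x (i + 1) + x (i + 2)
  · exact (genAngle_mem_openAngleSimplex h).2
  · push Not at h
    obtain ⟨i, hi⟩ := h
    rw [genAngle_eq_single hx hi]
    simp

theorem genAngle_law_sin (h : ∀ i, x i < x (i + 1) + x (i + 2)) (i : Fin 3) :
    sin (genAngle x i) * x (i + 2) = sin (genAngle x (i + 2)) * x i := by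
  obtain ⟨p, hp⟩ := exists_dist_eq_of_triangle_inequalities h
  have hp_next := hp (i + 2)
  have hlaw := EuclideanGeometry.law_sin (p (i + 2)) (p i) (p (i + 1))
  simp only [← angle_eq_genAngle (pos_of_triangle_inequalities h) hp, add_assoc, Fin.reduceAdd,
    add_zero] at hp_next ⊢
  rwa [hp_next, hp] at hlaw

theorem exists_circumradius (h : ∀ i, x i < x (i + 1) + x (i + 2)) :
    ∃ R > 0, ∀ i, x i = R * (2 * sin (genAngle x i)) := by
  have hsin := sin_pos_of_mem_openAngleSimplex (genAngle_mem_openAngleSimplex h)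
  have hratio : ∀ i, x i * sin (genAngle x 0) = x 0 * sin (genAngle x i) := fun i ↦ by
    have h₀ := genAngle_law_sin h 0
    have h₁ := genAngle_law_sin h 1
    simp only [Fin.reduceAdd] at h₀ h₁
    fin_cases i <;> simp only [Fin.zero_eta, Fin.mk_one, Fin.reduceFinMk] <;> linarith
  refine ⟨x 0 / (2 * sin (genAngle x 0)),
    div_pos (pos_of_triangle_inequalities h 0) (mul_pos two_pos (hsin 0)), fun i ↦ ?_⟩
  have := (hsin 0).ne'
  field_simp
  exact hratio i

end EuclideanTriangle

section MaximumPrinciple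

variable {x b : Fin 3 → ℝ}

theorem continuousOn_triangleCovolume_genAngle :
    ContinuousOn (fun x ↦ triangleCovolume x (genAngle x)) {x | ∀ i, 0 < x i} :=
  continuousOn_finsetSum _ fun i _ ↦
    (continuous_lob.comp_continuousOn (continuousOn_genAngle i)).add <|
      (continuousOn_genAngle i).mul <|
        (continuous_apply i).continuousOn.log fun _ hx ↦ (hx i).ne'

theorem triangleCovolume_le_of_triangle_inequalities (h : ∀ i, x i < x (i + 1) + x (i + 2))
    (hb : b ∈ angleSimplex) : triangleCovolume x b ≤ triangleCovolume x (genAngle x) := by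
  obtain ⟨R, hR, hlaw⟩ := exists_circumradius h
  exact triangleCovolume_le_of_law_sin hR.ne' (genAngle_mem_openAngleSimplex h) hlaw hb

theorem triangleCovolume_le_of_eq_add {i : Fin 3} (hx : ∀ i, 0 < x i)
    (h : x i = x (i + 1) + x (i + 2)) (hb : b ∈ angleSimplex) :
    triangleCovolume x b ≤ triangleCovolume x (genAngle x) := by
  have hpath : Continuous fun t ↦ Function.update x i t := continuous_const.update i continuous_id
  have hleft : ContinuousAt (fun t ↦ triangleCovolume (Function.update x i t) b) (x i) := by
    simp only [triangleCovolume_update]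
    have := continuousAt_log (hx i).ne'
    fun_prop
  have hright : ContinuousAt (fun t ↦ triangleCovolume (Function.update x i t)
      (genAngle (Function.update x i t))) (x i) :=
    (continuousOn_triangleCovolume_genAngle.comp hpath.continuousOn fun t ht ↦
      (Function.forall_update_iff x fun _ y ↦ 0 < y).2 ⟨ht, fun j _ ↦ hx j⟩).continuousAt
        (Ioi_mem_nhds (hx i))
  suffices hnear : ∀ᶠ t in 𝓝[<] x i, triangleCovolume (Function.update x i t) b ≤
      triangleCovolume (Function.update x i t) (genAngle (Function.update x i t)) by
    simpa only [Function.update_eq_self] using le_of_tendsto_of_tendsto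
      hleft.continuousWithinAt hright.continuousWithinAt hnear
  have h₁ : ∀ᶠ t in 𝓝[<] x i, x (i + 1) - x (i + 2) < t :=
    eventually_nhdsWithin_of_eventually_nhds <| eventually_gt_nhds <| by linarith [hx (i + 2)]
  have h₂ : ∀ᶠ t in 𝓝[<] x i, x (i + 2) - x (i + 1) < t :=
    eventually_nhdsWithin_of_eventually_nhds <| eventually_gt_nhds <| by linarith [hx (i + 1)]
  filter_upwards [h₁, h₂, self_mem_nhdsWithin] with t ht₁ ht₂ (ht : t < x i)
  refine triangleCovolume_le_of_triangle_inequalities (fun j ↦ ?_) hb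
  obtain rfl | rfl | rfl := fin_three_eq_or_eq_add_one_or_eq_add_two i j
  all_goals
    simp only [Function.update_self, Fin.isValue, ne_eq, add_eq_left, one_ne_zero,
      not_false_eq_true, Function.update_of_ne, add_assoc, Fin.reduceAdd, Fin.reduceEq, add_zero]
    linarith

theorem triangleCovolume_le_of_add_le {i : Fin 3} (hx : ∀ i, 0 < x i)
    (h : x (i + 1) + x (i + 2) ≤ x i) (hb : b ∈ angleSimplex) :
    triangleCovolume x b ≤ triangleCovolume x (genAngle x) := by
  set s := x (i + 1) + x (i + 2) with hs
  have hs_pos : 0 < s := add_pos (hx _) (hx _)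
  have hy : ∀ j, 0 < Function.update x i s j :=
    (Function.forall_update_iff x fun _ y ↦ 0 < y).2 ⟨hs_pos, fun j _ ↦ hx j⟩
  have hsum : s = Function.update x i s (i + 1) + Function.update x i s (i + 2) := by simp [hs]
  have hmax := triangleCovolume_le_of_eq_add (i := i) hy (by simpa using hsum) hb
  rw [genAngle_eq_single (i := i) hy (by simpa using hsum.ge), triangleCovolume_update,
    triangleCovolume_update, Pi.single_eq_same] at hmax
  have hgrowth : b i * (log (x i) - log s) ≤ π * (log (x i) - log s) :=
    mul_le_mul_of_nonneg_right (le_pi_of_mem_angleSimplex hb i)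
      (sub_nonneg.2 (log_le_log hs_pos h))
  rw [genAngle_eq_single hx h]
  linarith

theorem triangleCovolume_le_genAngle (hx : ∀ i, 0 < x i) (hb : b ∈ angleSimplex) :
    triangleCovolume x b ≤ triangleCovolume x (genAngle x) := by
  by_cases h : ∀ i, x i < x (i + 1) + x (i + 2)
  · exact triangleCovolume_le_of_triangle_inequalities h hb
  · push Not at h
    obtain ⟨i, hi⟩ := h
    exact triangleCovolume_le_of_add_le hx hi hb

end MaximumPrinciple

section Covolume

theorem triSides_pos (l : Fin 6 → ℝ) (k : Fin 3) : 0 < triSides l k := by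
  unfold triSides
  split_ifs <;> positivity

theorem continuous_triSides : Continuous triSides := by
  refine continuous_pi fun k ↦ ?_
  unfold triSides
  split_ifs <;> fun_prop

theorem continuous_dihedral (p : Fin 6) : Continuous fun l ↦ dihedral l p :=
  (continuousOn_genAngle (quadIndex p)).comp_continuous continuous_triSides triSides_pos

theorem two_mul_triangleCovolume_triSides (l : Fin 6 → ℝ) (a : Fin 3 → ℝ) :
    2 * triangleCovolume (triSides l) a =
      ∑ p, lob (a (quadIndex p)) + ∑ p, a (quadIndex p) * l p := by
  simp only [triangleCovolume, triSides, quadIndex, Fin.sum_univ_three, Fin.sum_univ_six, log_exp,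
    apply_ite log, Fin.val_eq_zero_iff, Fin.isValue, Fin.reduceEq, Fin.coe_ofNat_eq_mod,
    Nat.reduceMod, Nat.reduceEqDiff, ↓reduceIte, or_false, or_true, or_self]
  ring

theorem cov6_eq_two_mul_triangleCovolume (l : Fin 6 → ℝ) :
    cov6 l = 2 * triangleCovolume (triSides l) (genAngle (triSides l)) := by
  simp only [two_mul_triangleCovolume_triSides, cov6, vol6, dihedral]
  ring

/-- The linear form `v ↦ ∑ α_p(l) v_p`, the candidate for the derivative of `cov6` at `l`. -/
def dihedralForm (l : Fin 6 → ℝ) : (Fin 6 → ℝ) →L[ℝ] ℝ :=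
  ∑ p, dihedral l p • ContinuousLinearMap.proj p

theorem dihedralForm_apply (l v : Fin 6 → ℝ) : dihedralForm l v = ∑ p, dihedral l p * v p := by
  simp [dihedralForm]

theorem dihedralForm_single (l : Fin 6 → ℝ) (p : Fin 6) :
    dihedralForm l (Pi.single p 1) = dihedral l p := by
  simp [dihedralForm_apply, Pi.single_apply]

theorem continuous_dihedralForm : Continuous dihedralForm :=
  continuous_finsetSum _ fun p _ ↦ (continuous_dihedral p).smul continuous_const

theorem cov6_add_dihedralForm_le (l m : Fin 6 → ℝ) :
    cov6 l + dihedralForm l (m - l) ≤ cov6 m := by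
  have hmax := triangleCovolume_le_genAngle (triSides_pos m)
    (genAngle_mem_angleSimplex (triSides_pos l))
  calc cov6 l + dihedralForm l (m - l)
      = 2 * triangleCovolume (triSides m) (genAngle (triSides l)) := by
        rw [cov6_eq_two_mul_triangleCovolume, two_mul_triangleCovolume_triSides,
          two_mul_triangleCovolume_triSides, dihedralForm_apply]
        simp only [Pi.sub_apply, mul_sub, Finset.sum_sub_distrib, dihedral]
        ring
    _ ≤ cov6 m := by rw [cov6_eq_two_mul_triangleCovolume]; gcongr

theorem hasFDerivAt_cov6 (l : Fin 6 → ℝ) : HasFDerivAt cov6 (dihedralForm l) l :=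
  hasFDerivAt_of_subgradient continuous_dihedralForm.continuousAt
    (.of_forall fun m ↦ ⟨cov6_add_dihedralForm_le l m, cov6_add_dihedralForm_le m l⟩)

end Covolume

/-- the co-volume function `cov : ℝ⁶ → ℝ` is `C¹`, convex, and
`∂cov/∂l_p = α_p`. -/
theorem cov6_contDiff_convex_deriv :
    ContDiff ℝ 1 cov6 ∧ ConvexOn ℝ Set.univ cov6 ∧
    ∀ (l : Fin 6 → ℝ) (p : Fin 6), fderiv ℝ cov6 l (Pi.single p 1) = dihedral l p := by
  refine ⟨contDiff_one_iff_hasFDerivAt.2 ⟨dihedralForm, continuous_dihedralForm, hasFDerivAt_cov6⟩,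
    convexOn_of_subgradient (g := fun l ↦ (dihedralForm l : (Fin 6 → ℝ) →ₗ[ℝ] ℝ)) convex_univ
      fun l _ m _ ↦ cov6_add_dihedralForm_le l m, fun l p ↦ ?_⟩
  rw [(hasFDerivAt_cov6 l).fderiv, dihedralForm_single]
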